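/- Let k ≥ 4 be an integer. Then the elliptic zeta value obeys the modular three-term relation Z_k(τ,σ) = τ^{−k} Z_k(−1/τ, σ/τ) + (−σ)^{−k} Z_k(−τ/σ, −1/σ) for all τ, σ ∈ H such that σ/τ ∈ H. -/

import Mathlib

open Complex Filter Topology

/-- The open upper half-plane as a subset of `ℂ`. -/
def UHP : Set ℂ := {z : ℂ | 0 < z.im}

/-- `qexp τ = e^{2πiτ}`. -/
noncomputable def qexp (τ : ℂ) : ℂ := Complex.exp (2 * Real.pi * Complex.I * τ)

/-- Elliptic zeta values `Z_k(τ,σ)`. -/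
noncomputable def ellipticZeta (k : ℕ) (τ σ : ℂ) : ℂ :=
  -((2 * (Real.pi : ℂ) * Complex.I) ^ k / (Nat.factorial (k - 1) : ℂ)) *
    ∑' j : ℕ+, (j : ℂ) ^ (k - 1) *
      (qexp τ ^ (j : ℕ) - (-1 : ℂ) ^ k * qexp σ ^ (j : ℕ)) /
      ((1 - qexp τ ^ (j : ℕ)) * (1 - qexp σ ^ (j : ℕ)))

/-- `D_k(q)`: the normalized generating function of sums of `(k-1)`-st powers of divisors. -/
noncomputable def Dk (k : ℕ) (q : ℂ) : ℂ :=
  ((-2 * (Real.pi : ℂ) * Complex.I) ^ k / (Nat.factorial (k - 1) : ℂ)) *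
    ∑' n : ℕ+, (∑ d ∈ Nat.divisors (n : ℕ), (d : ℂ) ^ (k - 1)) * q ^ (n : ℕ)

/-- Ruijsenaars's elliptic gamma function. -/
noncomputable def ellipticGamma (z τ σ : ℂ) : ℂ :=
  ∏' p : ℕ × ℕ,
    (1 - qexp τ ^ (p.1 + 1) * qexp σ ^ (p.2 + 1) * Complex.exp (-(2 * Real.pi * Complex.I) * z)) /
    (1 - qexp τ ^ p.1 * qexp σ ^ p.2 * Complex.exp (2 * Real.pi * Complex.I * z))

/-- The modified theta function `θ₀(z,τ)`. -/
noncomputable def theta0 (z τ : ℂ) : ℂ :=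
  ∏' j : ℕ, (1 - qexp τ ^ (j + 1) * Complex.exp (-(2 * Real.pi * Complex.I) * z)) *
            (1 - qexp τ ^ j * Complex.exp (2 * Real.pi * Complex.I * z))

/-- A modular form of weight `k` for `SL(2,ℤ)`: a holomorphic function on the
upper half-plane transforming with weight `k` under `SL(2,ℤ)` and bounded as `Im τ → ∞`. -/
def IsModularForm (k : ℕ) (G : ℂ → ℂ) : Prop :=
  DifferentiableOn ℂ G UHP ∧
  (∀ A : Matrix.SpecialLinearGroup (Fin 2) ℤ, ∀ τ ∈ UHP,
      G (((A 0 0 : ℤ) * τ + (A 0 1 : ℤ)) / ((A 1 0 : ℤ) * τ + (A 1 1 : ℤ))) =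
        ((A 1 0 : ℤ) * τ + (A 1 1 : ℤ)) ^ k * G τ) ∧
  (∃ C : ℝ, ∀ τ ∈ UHP, 1 ≤ τ.im → ‖G τ‖ ≤ C)

/-- All factors in the defining double product of the elliptic gamma function are nonzero. -/
def EGFactorsNeZero (z τ σ : ℂ) : Prop :=
  ∀ j ℓ : ℕ,
    (1 - qexp τ ^ (j + 1) * qexp σ ^ (ℓ + 1) * Complex.exp (-(2 * Real.pi * Complex.I) * z)) ≠ 0 ∧
    (1 - qexp τ ^ j * qexp σ ^ ℓ * Complex.exp (2 * Real.pi * Complex.I * z)) ≠ 0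

/-! `Z_k(τ, σ)` is the absolutely convergent sum of `(xτ + yσ + m)⁻ᵏ` over `(x, y, m) ∈ ℤ³`,
weighted by `[0 ≤ x] - [y ≤ 0]`: each of the two quadrants where the weight is nonzero contributes
one half of the defining `q`-series, by the Lipschitz formula in `m` followed by a geometric
summation in `x` and `y`. The weighted lattice sum is homogeneous of degree `-k` in the three
periods `τ, σ, 1`, and the three-term relation is the telescoping
`[0 ≤ x] - [y ≤ 0] = ([m ≤ 0] - [y ≤ 0]) + ([0 ≤ x] - [m ≤ 0])`. -/

section UpperHalfPlane

variable {z : ℂ}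

lemma ne_zero_of_mem_UHP (hz : z ∈ UHP) : z ≠ 0 := by
  rintro rfl
  simp [UHP] at hz

lemma neg_one_div_mem_UHP (hz : z ∈ UHP) : -1 / z ∈ UHP := by
  rw [show -1 / z = (-z)⁻¹ by rw [inv_neg, neg_div, one_div]]
  exact UpperHalfPlane.im_inv_neg_coe_pos ⟨z, hz⟩

lemma norm_qexp_lt_one (hz : z ∈ UHP) : ‖qexp z‖ < 1 :=
  UpperHalfPlane.norm_exp_two_pi_I_lt_one ⟨z, hz⟩

end UpperHalfPlane

section LatticeSummability

lemma summable_inv_norm_pow_pi_int {ι : Type*} [Fintype ι] {n : ℕ} (hn : Fintype.card ι < n) :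
    Summable fun v : ι → ℤ ↦ ‖v‖⁻¹ ^ n := by
  set L := Submodule.span ℤ (Set.range (Pi.basisFun ℝ ι))
  have hmem (v : ι → ℤ) : (fun i ↦ (v i : ℝ)) ∈ L :=
    (Module.Basis.mem_span_iff_repr_mem ℤ (Pi.basisFun ℝ ι) _).2 fun i ↦ ⟨v i, by simp⟩
  have hinj : Function.Injective fun v : ι → ℤ ↦ (⟨_, hmem v⟩ : L) := fun v w h ↦
    funext fun i ↦ by simpa using congrFun (congrArg Subtype.val h) i
  have hrank : Module.finrank ℤ L < n := by
    rwa [ZLattice.rank ℝ L, Module.finrank_fintype_fun_eq_card]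
  refine ((ZLattice.summable_norm_pow_inv L n hrank).comp_injective hinj).congr fun v ↦ ?_
  have hnorm (i : ι) : ‖(v i : ℝ)‖₊ = ‖v i‖₊ := NNReal.eq (Int.norm_cast_real (v i))
  simp [Pi.norm_def, hnorm]

variable {τ σ : ℂ}

lemma exists_norm_le_mul_norm_of_nonneg (hτ : τ ∈ UHP) (hσ : σ ∈ UHP) :
    ∃ C : ℝ, ∀ v : Fin 3 → ℤ, 0 ≤ v 0 → 0 ≤ v 1 → ‖v‖ ≤ C * ‖v 0 * τ + v 1 * σ + v 2‖ := by
  have hτ' : 0 < τ.im := hτ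
  have hσ' : 0 < σ.im := hσ
  refine ⟨τ.im⁻¹ + σ.im⁻¹ + (1 + ‖τ‖ * τ.im⁻¹ + ‖σ‖ * σ.im⁻¹), fun v h0 h1 ↦ ?_⟩
  set z : ℂ := v 0 * τ + v 1 * σ + v 2 with hz
  have hx : (0 : ℝ) ≤ v 0 := mod_cast h0
  have hy : (0 : ℝ) ≤ v 1 := mod_cast h1
  have him : v 0 * τ.im + v 1 * σ.im ≤ ‖z‖ := by
    simpa [hz] using (le_abs_self _).trans (abs_im_le_norm z)
  have hx_le : v 0 ≤ τ.im⁻¹ * ‖z‖ := by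
    rw [le_inv_mul_iff₀ hτ']
    linarith [mul_nonneg hy hσ'.le]
  have hy_le : v 1 ≤ σ.im⁻¹ * ‖z‖ := by
    rw [le_inv_mul_iff₀ hσ']
    linarith [mul_nonneg hx hτ'.le]
  have hm_le : |(v 2 : ℝ)| ≤ (1 + ‖τ‖ * τ.im⁻¹ + ‖σ‖ * σ.im⁻¹) * ‖z‖ :=
    calc |(v 2 : ℝ)| = ‖z - v 0 * τ - v 1 * σ‖ := by simp [hz, add_assoc]
      _ ≤ ‖z‖ + ‖v 0 * τ‖ + ‖v 1 * σ‖ :=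
        (norm_sub_le _ _).trans (add_le_add_left (norm_sub_le _ _) _)
      _ = ‖z‖ + v 0 * ‖τ‖ + v 1 * ‖σ‖ := by simp [abs_of_nonneg hx, abs_of_nonneg hy]
      _ ≤ ‖z‖ + τ.im⁻¹ * ‖z‖ * ‖τ‖ + σ.im⁻¹ * ‖z‖ * ‖σ‖ := by gcongr
      _ = _ := by ring
  have hτ_nonneg : 0 ≤ τ.im⁻¹ * ‖z‖ := by positivity
  have hσ_nonneg : 0 ≤ σ.im⁻¹ * ‖z‖ := by positivity
  rw [pi_norm_le_iff_of_nonneg (by positivity), Fin.forall_fin_succ, Fin.forall_fin_two,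
    add_mul _ _ ‖z‖, add_mul _ _ ‖z‖]
  have hm_nonneg := (abs_nonneg _).trans hm_le
  refine ⟨?_, ?_, ?_⟩
  · rw [Int.norm_eq_abs, abs_of_nonneg hx]
    linarith [hσ_nonneg, hm_nonneg]
  · rw [Int.norm_eq_abs, Fin.succ_zero_eq_one, abs_of_nonneg hy]
    linarith [hτ_nonneg, hm_nonneg]
  · rw [Int.norm_eq_abs, Fin.succ_one_eq_two]
    linarith [hτ_nonneg, hσ_nonneg]

lemma summable_inv_pow_quadrant {k : ℕ} (hk : 4 ≤ k) (hτ : τ ∈ UHP) (hσ : σ ∈ UHP) :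
    Summable fun p : (ℕ × ℕ) × ℤ ↦ ((p.1.1 * τ + (p.1.2 + 1) * σ + p.2) ^ k)⁻¹ := by
  obtain ⟨C, hC⟩ := exists_norm_le_mul_norm_of_nonneg hτ hσ
  let ι : (ℕ × ℕ) × ℤ → Fin 3 → ℤ := fun p ↦ ![p.1.1, p.1.2 + 1, p.2]
  have hι : Function.Injective ι := by
    rintro ⟨⟨a, b⟩, n⟩ ⟨⟨a', b'⟩, n'⟩ h
    simpa [ι, and_assoc] using h
  have hsum : Summable fun p ↦ C ^ k * ‖ι p‖⁻¹ ^ k :=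
    ((summable_inv_norm_pow_pi_int (by rwa [Fintype.card_fin])).comp_injective hι).mul_left _
  refine hsum.of_norm_bounded fun p ↦ ?_
  have hle : ‖ι p‖ ≤ C * ‖p.1.1 * τ + (p.1.2 + 1) * σ + p.2‖ := by
    simpa [ι] using hC (ι p) (Int.natCast_nonneg _) (Int.natCast_nonneg (p.1.2 + 1))
  have hpos : 0 < ‖ι p‖ := norm_pos_iff.2 fun h ↦ by
    have : (p.1.2 : ℤ) + 1 = 0 := congrFun h 1
    omega
  have hz : 0 < ‖p.1.1 * τ + (p.1.2 + 1) * σ + p.2‖ :=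
    (norm_nonneg _).lt_of_ne' (right_ne_zero_of_mul (hpos.trans_le hle).ne')
  rw [norm_inv, norm_pow, ← inv_pow, ← mul_pow]
  gcongr
  rwa [← div_eq_mul_inv, inv_le_iff_one_le_mul₀ hz, div_mul_eq_mul_div, one_le_div hpos]

end LatticeSummability

section LambertSeries

variable {q r : ℂ}

/-- The Lambert-type series `∑ jᵐ rʲ / ((1 - qʲ)(1 - rʲ))`, one half of an elliptic zeta value. -/
noncomputable def lambertSum (m : ℕ) (q r : ℂ) : ℂ :=
  ∑' j : ℕ+, (j : ℂ) ^ m * r ^ (j : ℕ) / ((1 - q ^ (j : ℕ)) * (1 - r ^ (j : ℕ)))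

lemma hasSum_pow_mul_pow_succ (hq : ‖q‖ < 1) (hr : ‖r‖ < 1) :
    HasSum (fun p : ℕ × ℕ ↦ q ^ p.1 * r ^ (p.2 + 1)) (r / ((1 - q) * (1 - r))) := by
  have hsum := summable_mul_of_summable_norm
    (summable_norm_geometric_of_norm_lt_one hq) (summable_norm_geometric_of_norm_lt_one hr)
  have h := ((hasSum_geometric_of_norm_lt_one hq).mul
    (hasSum_geometric_of_norm_lt_one hr) hsum).mul_left r
  convert! h using 1
  · ext p
    ring
  · rw [div_eq_mul_inv, mul_inv]

lemma summable_natCast_pow_mul_pow (m : ℕ) (hq : ‖q‖ < 1) (hr : ‖r‖ < 1) :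
    Summable fun p : ℕ+ × (ℕ × ℕ) ↦ (p.1 : ℂ) ^ m * (q ^ p.2.1 * r ^ (p.2.2 + 1)) ^ (p.1 : ℕ) := by
  have hmajorant : Summable fun p : ℕ × (ℕ × ℕ) ↦
      ((p.1 : ℝ) ^ m * ‖r‖ ^ p.1) * (‖q‖ ^ p.2.1 * ‖r‖ ^ p.2.2) :=
    (summable_pow_mul_geometric_of_norm_lt_one m (by simpa using hr)).mul_of_nonneg
      ((summable_geometric_of_lt_one (norm_nonneg _) hq).mul_of_nonneg
        (summable_geometric_of_lt_one (norm_nonneg _) hr) (fun _ ↦ by positivity)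
        (fun _ ↦ by positivity))
      (fun _ ↦ by positivity) (fun _ ↦ by positivity)
  have hinj : Function.Injective (Prod.map (↑) id : ℕ+ × (ℕ × ℕ) → ℕ × (ℕ × ℕ)) :=
    PNat.coe_injective.prodMap Function.injective_id
  refine (hmajorant.comp_injective hinj).of_norm_bounded ?_
  rintro ⟨j, a, b⟩
  have hj : 1 ≤ (j : ℕ) := j.pos
  calc ‖(j : ℂ) ^ m * (q ^ a * r ^ (b + 1)) ^ (j : ℕ)‖
      = (j : ℝ) ^ m * (‖q‖ ^ (a * j) * ‖r‖ ^ ((b + 1) * j)) := by simp [mul_pow, ← pow_mul]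
    _ ≤ (j : ℝ) ^ m * (‖q‖ ^ a * ‖r‖ ^ (j + b)) := by
      gcongr ?_ * (?_ * ?_)
      · exact pow_le_pow_of_le_one (norm_nonneg _) hq.le (by nlinarith)
      · exact pow_le_pow_of_le_one (norm_nonneg _) hr.le (by nlinarith)
    _ = (j : ℝ) ^ m * ‖r‖ ^ (j : ℕ) * (‖q‖ ^ a * ‖r‖ ^ b) := by ring

lemma hasSum_lambert_fiberwise (m : ℕ) (hq : ‖q‖ < 1) (hr : ‖r‖ < 1) :
    HasSum (fun j : ℕ+ ↦ (j : ℂ) ^ m * r ^ (j : ℕ) / ((1 - q ^ (j : ℕ)) * (1 - r ^ (j : ℕ))))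
      (∑' p : ℕ+ × (ℕ × ℕ), (p.1 : ℂ) ^ m * (q ^ p.2.1 * r ^ (p.2.2 + 1)) ^ (p.1 : ℕ)) := by
  refine (summable_natCast_pow_mul_pow m hq hr).hasSum.prod_fiberwise fun j ↦ ?_
  have hpow {w : ℂ} (hw : ‖w‖ < 1) : ‖w ^ (j : ℕ)‖ < 1 := by
    simpa using pow_lt_one₀ (norm_nonneg w) hw j.ne_zero
  simpa only [mul_div_assoc, mul_pow, ← pow_mul, mul_comm (j : ℕ)] using
    (hasSum_pow_mul_pow_succ (hpow hq) (hpow hr)).mul_left ((j : ℂ) ^ m)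

lemma hasSum_lambertSum (m : ℕ) (hq : ‖q‖ < 1) (hr : ‖r‖ < 1) :
    HasSum (fun j : ℕ+ ↦ (j : ℂ) ^ m * r ^ (j : ℕ) / ((1 - q ^ (j : ℕ)) * (1 - r ^ (j : ℕ))))
      (lambertSum m q r) :=
  (hasSum_lambert_fiberwise m hq hr).summable.hasSum

lemma hasSum_tsum_pow_lambertSum (m : ℕ) (hq : ‖q‖ < 1) (hr : ‖r‖ < 1) :
    HasSum (fun p : ℕ × ℕ ↦ ∑' j : ℕ+, (j : ℂ) ^ m * (q ^ p.1 * r ^ (p.2 + 1)) ^ (j : ℕ))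
      (lambertSum m q r) := by
  have hswap := (Equiv.prodComm (ℕ × ℕ) ℕ+).hasSum_iff.2
    (summable_natCast_pow_mul_pow m hq hr).hasSum
  rw [← (hasSum_lambertSum m hq hr).unique (hasSum_lambert_fiberwise m hq hr)] at hswap
  exact hswap.prod_fiberwise fun p ↦ (hswap.summable.prod_factor p).hasSum

end LambertSeries

section EllipticZeta

variable {τ σ : ℂ}

lemma ellipticZeta_eq_lambertSum_sub (k : ℕ) (hτ : τ ∈ UHP) (hσ : σ ∈ UHP) :
    ellipticZeta k τ σ = (-2 * Real.pi * I) ^ k / (k - 1).factorial *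
      (lambertSum (k - 1) (qexp τ) (qexp σ) -
        (-1) ^ k * lambertSum (k - 1) (qexp σ) (qexp τ)) := by
  have hτσ := hasSum_lambertSum (k - 1) (norm_qexp_lt_one hτ) (norm_qexp_lt_one hσ)
  have hστ := hasSum_lambertSum (k - 1) (norm_qexp_lt_one hσ) (norm_qexp_lt_one hτ)
  have hsign : (-1 : ℂ) ^ k * (-1) ^ k = 1 := pow_mul_pow_eq_one k (by norm_num)
  have hconst : (-2 * Real.pi * I) ^ k = (-1) ^ k * (2 * Real.pi * I) ^ k := by
    rw [← mul_pow]; ring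
  rw [ellipticZeta, ← (hτσ.sub (hστ.mul_left ((-1) ^ k))).tsum_eq, ← tsum_mul_left,
    ← tsum_mul_left]
  refine tsum_congr fun j ↦ ?_
  rw [hconst, mul_comm (1 - qexp σ ^ (j : ℕ))]
  linear_combination ((2 * Real.pi * I) ^ k / (k - 1).factorial * ((j : ℂ) ^ (k - 1) *
    qexp τ ^ (j : ℕ) / ((1 - qexp τ ^ (j : ℕ)) * (1 - qexp σ ^ (j : ℕ))))) * hsign

lemma tsum_int_inv_add_pow {k : ℕ} (hk : 2 ≤ k) {z : ℂ} (hz : z ∈ UHP) :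
    ∑' n : ℤ, ((z + n) ^ k)⁻¹ = (-2 * Real.pi * I) ^ k / (k - 1).factorial *
      ∑' j : ℕ+, (j : ℂ) ^ (k - 1) * qexp z ^ (j : ℕ) := by
  have h := EisensteinSeries.qExpansion_identity_pnat (k := k - 1) (by omega) ⟨z, hz⟩
  simpa only [qexp, one_div, Nat.sub_add_cancel (show 1 ≤ k by omega)] using h

lemma hasSum_inv_pow_quadrant {k : ℕ} (hk : 4 ≤ k) (hτ : τ ∈ UHP) (hσ : σ ∈ UHP) :
    HasSum (fun p : (ℕ × ℕ) × ℤ ↦ ((p.1.1 * τ + (p.1.2 + 1) * σ + p.2) ^ k)⁻¹)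
      ((-2 * Real.pi * I) ^ k / (k - 1).factorial *
        lambertSum (k - 1) (qexp τ) (qexp σ)) := by
  have hsum := summable_inv_pow_quadrant hk hτ hσ
  have hinner (p : ℕ × ℕ) : ∑' n : ℤ, ((p.1 * τ + (p.2 + 1) * σ + n) ^ k)⁻¹ =
      (-2 * Real.pi * I) ^ k / (k - 1).factorial *
        ∑' j : ℕ+, (j : ℂ) ^ (k - 1) * (qexp τ ^ p.1 * qexp σ ^ (p.2 + 1)) ^ (j : ℕ) := by
    have hmem : p.1 * τ + (p.2 + 1) * σ ∈ UHP := by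
      have hτ' : 0 < τ.im := hτ
      have hσ' : 0 < σ.im := hσ
      have : 0 < p.1 * τ.im + (p.2 + 1) * σ.im := by positivity
      simpa [UHP] using this
    have hexp : qexp (p.1 * τ + (p.2 + 1) * σ) = qexp τ ^ p.1 * qexp σ ^ (p.2 + 1) := by
      simp only [qexp, ← exp_nat_mul, ← exp_add]
      push_cast
      ring_nf
    rw [tsum_int_inv_add_pow (by omega) hmem, hexp]
  have hfiber := hsum.hasSum.prod_fiberwise fun p ↦ (hsum.prod_factor p).hasSum
  simp only [hinner] at hfiber
  have hlambert := (hasSum_tsum_pow_lambertSum (k - 1) (norm_qexp_lt_one hτ)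
    (norm_qexp_lt_one hσ)).mul_left ((-2 * Real.pi * I) ^ k / (k - 1).factorial)
  rw [hlambert.unique hfiber]
  exact hsum.hasSum

end EllipticZeta

section LatticeTerms

variable (k : ℕ) (ω₁ ω₂ ω₃ : ℂ)

/-- The summand `(xω₁ + yω₂ + mω₃)⁻ᵏ` attached to a point of `ℤ³` (zero where the linear form
vanishes and `k ≠ 0`). -/
noncomputable def latticeTerm (p : ℤ × ℤ × ℤ) : ℂ :=
  ((p.1 * ω₁ + p.2.1 * ω₂ + p.2.2 * ω₃) ^ k)⁻¹

/-- The weight `[0 ≤ x] - [y ≤ 0]`: it is `1` on the quadrant `0 ≤ x, 0 < y`, `-1` on the quadrant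
`x < 0, y ≤ 0`, and vanishes elsewhere. -/
def quadrantSign (x y : ℤ) : ℤ :=
  (if 0 ≤ x then 1 else 0) - (if y ≤ 0 then 1 else 0)

/-- The lattice summand weighted by `quadrantSign`; for the periods `τ, σ, 1` its sum over `ℤ³` is
`Z_k(τ, σ)`. -/
noncomputable def signedLatticeTerm (p : ℤ × ℤ × ℤ) : ℂ :=
  quadrantSign p.1 p.2.1 * latticeTerm k ω₁ ω₂ ω₃ p

/-- The points `(x, y, m)` of `ℤ³` with `0 ≤ x` and `0 < y`, where `quadrantSign` is `1`. -/
def positiveQuadrant : Set (ℤ × ℤ × ℤ) := {p | 0 ≤ p.1 ∧ 0 < p.2.1}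

/-- The involution `(x, y, m) ↦ (-y, -x, -m)`, exchanging the two quadrants on which `quadrantSign`
is nonzero. -/
def quadrantSwap : ℤ × ℤ × ℤ ≃ ℤ × ℤ × ℤ where
  toFun p := (-p.2.1, -p.1, -p.2.2)
  invFun p := (-p.2.1, -p.1, -p.2.2)
  left_inv p := by simp
  right_inv p := by simp

/-- The quarter turn `(x, y, m) ↦ (-m, y, x)`, which carries the linear form with periods
`(ω₁, ω₂, ω₃)` to the one with periods `(-ω₃, ω₂, ω₁)`. -/
def quarterTurnFst : ℤ × ℤ × ℤ ≃ ℤ × ℤ × ℤ where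
  toFun p := (-p.2.2, p.2.1, p.1)
  invFun p := (p.2.2, p.2.1, -p.1)
  left_inv p := by simp
  right_inv p := by simp

/-- The quarter turn `(x, y, m) ↦ (x, m, -y)`, which carries the linear form with periods
`(ω₁, ω₂, ω₃)` to the one with periods `(ω₁, ω₃, -ω₂)`. -/
def quarterTurnSnd : ℤ × ℤ × ℤ ≃ ℤ × ℤ × ℤ where
  toFun p := (p.1, p.2.2, -p.2.1)
  invFun p := (p.1, -p.2.2, p.2.1)
  left_inv p := by simp
  right_inv p := by simp

lemma latticeTerm_quadrantSwap (p : ℤ × ℤ × ℤ) :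
    latticeTerm k ω₂ ω₁ ω₃ (quadrantSwap p) = (-1) ^ k * latticeTerm k ω₁ ω₂ ω₃ p := by
  have hneg : ((-1 : ℂ) ^ k) = ((-1) ^ k)⁻¹ := by rw [← inv_pow]; norm_num
  simp only [latticeTerm, quadrantSwap, Equiv.coe_fn_mk]
  rw [hneg, ← mul_inv, ← mul_pow]
  push_cast
  ring_nf

lemma signedLatticeTerm_mul (c : ℂ) (p : ℤ × ℤ × ℤ) :
    signedLatticeTerm k (c * ω₁) (c * ω₂) (c * ω₃) p =
      c ^ (-(k : ℤ)) * signedLatticeTerm k ω₁ ω₂ ω₃ p := by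
  rw [signedLatticeTerm, signedLatticeTerm, mul_left_comm, latticeTerm, latticeTerm, zpow_neg,
    zpow_natCast, ← mul_inv, ← mul_pow]
  ring_nf

lemma signedLatticeTerm_eq_indicator_sub (p : ℤ × ℤ × ℤ) :
    signedLatticeTerm k ω₁ ω₂ ω₃ p =
      positiveQuadrant.indicator (latticeTerm k ω₁ ω₂ ω₃) p -
        (-1) ^ k * positiveQuadrant.indicator (latticeTerm k ω₂ ω₁ ω₃) (quadrantSwap p) := by
  have hsign : (-1 : ℂ) ^ k * (-1) ^ k = 1 := pow_mul_pow_eq_one k (by norm_num)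
  have hmem : p ∈ positiveQuadrant ↔ 0 ≤ p.1 ∧ ¬ p.2.1 ≤ 0 := by
    rw [not_le, positiveQuadrant, Set.mem_ofPred_eq]
  have hmem_swap : quadrantSwap p ∈ positiveQuadrant ↔ ¬ 0 ≤ p.1 ∧ p.2.1 ≤ 0 := by
    simp [positiveQuadrant, quadrantSwap, and_comm]
  classical
  rw [Set.indicator_apply, Set.indicator_apply, latticeTerm_quadrantSwap, signedLatticeTerm,
    quadrantSign]
  simp only [hmem, hmem_swap, mul_ite, mul_zero, ← mul_assoc, hsign, one_mul]
  by_cases hx : 0 ≤ p.1 <;> by_cases hy : p.2.1 ≤ 0 <;> simp [hx, hy]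

lemma quadrantSign_cocycle (x y m : ℤ) :
    quadrantSign x y = quadrantSign (-m) y + quadrantSign x m := by
  simp only [quadrantSign, Left.nonneg_neg_iff]
  ring

lemma signedLatticeTerm_three_term (p : ℤ × ℤ × ℤ) :
    signedLatticeTerm k ω₁ ω₂ ω₃ p =
      signedLatticeTerm k (-ω₃) ω₂ ω₁ (quarterTurnFst p) +
        signedLatticeTerm k ω₁ ω₃ (-ω₂) (quarterTurnSnd p) := by
  have hFst : latticeTerm k (-ω₃) ω₂ ω₁ (quarterTurnFst p) = latticeTerm k ω₁ ω₂ ω₃ p := by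
    simp only [latticeTerm, quarterTurnFst, Equiv.coe_fn_mk]
    push_cast
    ring_nf
  have hSnd : latticeTerm k ω₁ ω₃ (-ω₂) (quarterTurnSnd p) = latticeTerm k ω₁ ω₂ ω₃ p := by
    simp only [latticeTerm, quarterTurnSnd, Equiv.coe_fn_mk]
    push_cast
    ring_nf
  rw [signedLatticeTerm, signedLatticeTerm, signedLatticeTerm, hFst, hSnd, ← add_mul,
    quadrantSign_cocycle p.1 p.2.1 p.2.2]
  simp only [quarterTurnFst, quarterTurnSnd, Equiv.coe_fn_mk, Int.cast_add]

end LatticeTerms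

section WeightedLatticeSum

variable {k : ℕ} {τ σ : ℂ}

lemma hasSum_indicator_positiveQuadrant {M : Type*} [AddCommMonoid M] [TopologicalSpace M]
    {f : ℤ × ℤ × ℤ → M} {s : M}
    (h : HasSum (fun p : (ℕ × ℕ) × ℤ ↦ f (p.1.1, p.1.2 + 1, p.2)) s) :
    HasSum (positiveQuadrant.indicator f) s := by
  let ι : (ℕ × ℕ) × ℤ → ℤ × ℤ × ℤ := fun p ↦ (p.1.1, p.1.2 + 1, p.2)
  have hι : Function.Injective ι := by
    rintro ⟨⟨a, b⟩, n⟩ ⟨⟨a', b'⟩, n'⟩ h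
    simpa [ι, and_assoc] using h
  have hrange : Set.range ι = positiveQuadrant := by
    ext ⟨x, y, m⟩
    refine ⟨?_, fun ⟨hx, hy⟩ ↦ ⟨((x.toNat, (y - 1).toNat), m), ?_⟩⟩
    · rintro ⟨⟨⟨a, b⟩, n⟩, h⟩
      simp only [ι, Prod.mk.injEq] at h
      simp only [positiveQuadrant, Set.mem_ofPred_eq]
      omega
    · simp only [ι, Prod.mk.injEq, and_true] at hx hy ⊢
      omega
  rw [← hrange]
  exact hasSum_subtype_iff_indicator.1 (hι.hasSum_range_iff.2 h)

lemma hasSum_signedLatticeTerm_one (hk : 4 ≤ k) (hτ : τ ∈ UHP) (hσ : σ ∈ UHP) :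
    HasSum (signedLatticeTerm k τ σ 1) (ellipticZeta k τ σ) := by
  have hquadrant {α β : ℂ} (hα : α ∈ UHP) (hβ : β ∈ UHP) :
      HasSum (positiveQuadrant.indicator (latticeTerm k α β 1))
        ((-2 * Real.pi * I) ^ k / (k - 1).factorial *
          lambertSum (k - 1) (qexp α) (qexp β)) :=
    hasSum_indicator_positiveQuadrant <| by
      simpa [latticeTerm] using hasSum_inv_pow_quadrant hk hα hβ
  rw [ellipticZeta_eq_lambertSum_sub k hτ hσ, mul_sub, mul_left_comm,
    funext (signedLatticeTerm_eq_indicator_sub k τ σ 1)]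
  exact (hquadrant hτ hσ).sub ((quadrantSwap.hasSum_iff.2 (hquadrant hσ hτ)).mul_left _)

lemma hasSum_signedLatticeTerm (hk : 4 ≤ k) {ω₁ ω₂ ω₃ : ℂ} (hτ : τ ∈ UHP) (hσ : σ ∈ UHP)
    (h₁ : ω₃ * τ = ω₁) (h₂ : ω₃ * σ = ω₂) :
    HasSum (signedLatticeTerm k ω₁ ω₂ ω₃) (ω₃ ^ (-(k : ℤ)) * ellipticZeta k τ σ) := by
  have h := (hasSum_signedLatticeTerm_one hk hτ hσ).mul_left (ω₃ ^ (-(k : ℤ)))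
  simp only [← signedLatticeTerm_mul, h₁, h₂, mul_one] at h
  exact h

end WeightedLatticeSum

/-- modular three-term relation for `Z_k`, `k ≥ 4`. -/
theorem ellipticZeta_modular_three_term
    (k : ℕ) (hk : 4 ≤ k) (τ σ : ℂ) (hτ : τ ∈ UHP) (hσ : σ ∈ UHP) (hστ : σ / τ ∈ UHP) :
    ellipticZeta k τ σ =
      τ ^ (-(k : ℤ)) * ellipticZeta k (-1 / τ) (σ / τ) +
      (-σ) ^ (-(k : ℤ)) * ellipticZeta k (-(τ / σ)) (-1 / σ) := by
  have hτ₀ := ne_zero_of_mem_UHP hτ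
  have hσ₀ := ne_zero_of_mem_UHP hσ
  have hτσ : -(τ / σ) ∈ UHP := by
    simpa only [neg_div, one_div_div] using neg_one_div_mem_UHP hστ
  have h₁ : HasSum (signedLatticeTerm k τ σ 1) _ := hasSum_signedLatticeTerm_one hk hτ hσ
  have h₂ : HasSum (signedLatticeTerm k (-1) σ τ) _ :=
    hasSum_signedLatticeTerm hk (neg_one_div_mem_UHP hτ) hστ (by field_simp) (by field_simp)
  have h₃ : HasSum (signedLatticeTerm k τ 1 (-σ)) _ :=
    hasSum_signedLatticeTerm hk hτσ (neg_one_div_mem_UHP hσ) (by field_simp) (by field_simp)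
  rw [funext (signedLatticeTerm_three_term k τ σ 1)] at h₁
  exact h₁.unique ((quarterTurnFst.hasSum_iff.2 h₂).add (quarterTurnSnd.hasSum_iff.2 h₃))
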